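/- Let (X,d) be a metric space and T a metrically nonspreading mapping of X into itself that has at least one fixed point. Then T is asymptotically regular, i.e., d(T^{n+1}x, T^{n}x) → 0 as n → ∞ for every x ∈ X. -/

import Mathlib

open Filter

/-!
Write `a k n = d(T^{n+k} x, T^n x)²`. The nonspreading inequality bounds `a (k+1) (n+1)` by the mean
of `a (k+2) n` and `a k (n+1)`: the value `a k n` is dominated by its average along a simple random
walk in `k`, absorbed at `k = 0`, where `a` vanishes. On a bounded orbit, `a 1 n` is therefore at
most a constant times the probability that the walk started at `1` has not been absorbed before `n`
is used up, which is of order `1 / √n`. An explicit quadratic barrier makes this quantitative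
without any probability. A fixed point `u` makes orbits bounded, since `d(T x, u) ≤ d(x, u)`.
-/

section Barrier

variable {a : ℕ → ℕ → ℝ} {C : ℝ}

/- The right-hand side satisfies the recursion with equality: `k * (2 * K - k)` loses `1` under
averaging over `k ± 1`, and `-2 * n` gains `1` because only one of the two neighbours lowers `n`. -/
lemma sq_mul_le_quadratic_barrier (h_zero : ∀ n, a 0 n = 0) (h_le : ∀ k n, a k n ≤ C)
    (h_rec : ∀ k n, 2 * a (k + 1) (n + 1) ≤ a (k + 2) n + a k (n + 1))
    {K k n : ℕ} (hk : k ≤ K) (hn : 2 * n ≤ K ^ 2) :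
    (K : ℝ) ^ 2 * a k n ≤ C * (k * (2 * K - k) + (K ^ 2 - 2 * n)) := by
  have hC : 0 ≤ C := h_zero 0 ▸ h_le 0 0
  have le_of_barrier_ge {k n : ℕ} (h : (K : ℝ) ^ 2 ≤ k * (2 * K - k) + (K ^ 2 - 2 * n)) :
      (K : ℝ) ^ 2 * a k n ≤ C * (k * (2 * K - k) + (K ^ 2 - 2 * n)) :=
    calc (K : ℝ) ^ 2 * a k n ≤ K ^ 2 * C := by gcongr; exact h_le k n
      _ = C * K ^ 2 := mul_comm _ _
      _ ≤ C * (k * (2 * K - k) + (K ^ 2 - 2 * n)) := by gcongr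
  induction n generalizing k with
  | zero =>
    have hkK : (k : ℝ) ≤ K := mod_cast hk
    have : 0 ≤ (k : ℝ) * (2 * K - k) := mul_nonneg k.cast_nonneg (by linarith)
    exact le_of_barrier_ge (by simpa using this)
  | succ n ih_n =>
    have hnK : 2 * ((n + 1 : ℕ) : ℝ) ≤ K ^ 2 := mod_cast hn
    induction k with
    | zero => simpa [h_zero] using mul_nonneg hC (sub_nonneg.2 hnK)
    | succ k ih_k =>
      obtain rfl | hlt := hk.eq_or_lt
      · exact le_of_barrier_ge (by linarith)
      · have h_up := ih_n (k := k + 2) hlt (by lia)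
        have h_down := ih_k (by lia)
        have h_mean := mul_le_mul_of_nonneg_left (h_rec k n) (sq_nonneg (K : ℝ))
        push_cast at h_up h_down ⊢
        linarith

lemma mul_le_of_two_mul_sq_le (h_zero : ∀ n, a 0 n = 0) (h_le : ∀ k n, a k n ≤ C)
    (h_rec : ∀ k n, 2 * a (k + 1) (n + 1) ≤ a (k + 2) n + a k (n + 1))
    {m n : ℕ} (hmn : 2 * m ^ 2 ≤ n) : m * a 1 n ≤ C := by
  have hC : 0 ≤ C := h_zero 0 ▸ h_le 0 0
  obtain rfl | hm := m.eq_zero_or_pos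
  · simpa using hC
  obtain ⟨j, rfl⟩ := Nat.exists_eq_add_of_le' hmn
  -- With `K = 2 * m`, the term `K ^ 2 - 2 * n` of the barrier vanishes at `n = 2 * m ^ 2`.
  have h_barrier := sq_mul_le_quadratic_barrier (a := fun k n => a k (j + n)) (K := 2 * m) (k := 1)
    (n := 2 * m ^ 2) (fun n => h_zero _) (fun k n => h_le k _) (fun k n => h_rec k (j + n))
    (by lia) (by lia)
  have hm' : (0 : ℝ) < 4 * m := by positivity
  refine le_of_mul_le_mul_left ?_ hm'
  push_cast at h_barrier
  linarith

end Barrier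

/-- A self-map `T` is metrically nonspreading if `2 d(Tx, Ty)² ≤ d(Tx, y)² + d(Ty, x)²` for all
`x` and `y`. -/
def MetricallyNonspreading {X : Type*} [PseudoMetricSpace X] (T : X → X) : Prop :=
  ∀ x y : X, 2 * dist (T x) (T y) ^ 2 ≤ dist (T x) y ^ 2 + dist (T y) x ^ 2

namespace MetricallyNonspreading

variable {X : Type*} [PseudoMetricSpace X] {T : X → X} {u x : X}

lemma dist_apply_le_of_isFixedPt (hT : MetricallyNonspreading T) (hu : Function.IsFixedPt T u)
    (x : X) : dist (T x) u ≤ dist x u := by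
  have h := hT x u
  rw [hu, dist_comm u] at h
  exact le_of_sq_le_sq (by linarith) dist_nonneg

lemma isBounded_range_iterate (hT : MetricallyNonspreading T) (hu : Function.IsFixedPt T u)
    (x : X) : Bornology.IsBounded (Set.range fun n => T^[n] x) := by
  refine (Metric.isBounded_closedBall (x := u) (r := dist x u)).subset
    (Set.range_subset_iff.2 fun n => Metric.mem_closedBall.2 ?_)
  induction n with
  | zero => rfl
  | succ n ih =>
    rw [Function.iterate_succ_apply']
    exact (hT.dist_apply_le_of_isFixedPt hu _).trans ih

lemma two_mul_dist_iterate_sq_le (hT : MetricallyNonspreading T) (x : X) (k n : ℕ) :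
    2 * dist (T^[n + 1 + (k + 1)] x) (T^[n + 1] x) ^ 2 ≤
      dist (T^[n + (k + 2)] x) (T^[n] x) ^ 2 + dist (T^[n + 1 + k] x) (T^[n + 1] x) ^ 2 := by
  have h := hT (T^[n + 1 + k] x) (T^[n] x)
  simp only [← Function.iterate_succ_apply' T, Nat.succ_eq_add_one] at h
  rw [dist_comm (T^[n + 1] x)] at h
  rwa [show n + (k + 2) = n + 1 + k + 1 by lia]

lemma mul_dist_iterate_succ_sq_le (hT : MetricallyNonspreading T) {D : ℝ}
    (hD : ∀ i j, dist (T^[i] x) (T^[j] x) ≤ D) {m n : ℕ} (hmn : 2 * m ^ 2 ≤ n) :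
    m * dist (T^[n + 1] x) (T^[n] x) ^ 2 ≤ D ^ 2 :=
  mul_le_of_two_mul_sq_le (a := fun k n => dist (T^[n + k] x) (T^[n] x) ^ 2)
    (fun n => by simp) (fun k n => by gcongr; exact hD _ _) (hT.two_mul_dist_iterate_sq_le x) hmn

end MetricallyNonspreading

theorem stmt_10_general {X : Type*} [PseudoMetricSpace X] {T : X → X}
    (hT : MetricallyNonspreading T) {x : X}
    (hx : Bornology.IsBounded (Set.range fun n => T^[n] x)) :
    Tendsto (fun n : ℕ => dist (T^[n + 1] x) (T^[n] x)) atTop (nhds 0) := by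
  obtain ⟨D, hD⟩ := Metric.isBounded_range_iff.1 hx
  refine Metric.tendsto_atTop.2 fun ε hε => ?_
  obtain ⟨m, hm⟩ := exists_nat_gt (D ^ 2 / ε ^ 2)
  refine ⟨2 * m ^ 2, fun n hn => ?_⟩
  have h_lt : m * dist (T^[n + 1] x) (T^[n] x) ^ 2 < m * ε ^ 2 :=
    (hT.mul_dist_iterate_succ_sq_le hD hn).trans_lt ((div_lt_iff₀ (by positivity)).1 hm)
  rw [Real.dist_0_eq_abs, abs_of_nonneg dist_nonneg]
  exact lt_of_pow_lt_pow_left₀ 2 hε.le (lt_of_mul_lt_mul_left h_lt m.cast_nonneg)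

/-- Every metrically nonspreading mapping of a metric space into itself with a fixed
point is asymptotically regular. -/
theorem stmt_10 {X : Type*} [MetricSpace X] (T : X → X)
    (hT : ∀ x y : X, 2 * dist (T x) (T y) ^ 2 ≤ dist (T x) y ^ 2 + dist (T y) x ^ 2)
    (hfix : ∃ u : X, T u = u) (x : X) :
    Tendsto (fun n : ℕ => dist (T^[n + 1] x) (T^[n] x)) atTop (nhds 0) := by
  obtain ⟨u, hu⟩ := hfix
  exact stmt_10_general hT (MetricallyNonspreading.isBounded_range_iterate hT hu x)
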